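/- Let ω be a nonzero real number, suppose iω is an eigenvalue of P with geometric multiplicity p ≥ 1, and let Q₂ ∈ ℂ^{n×p} satisfy Q₂*Q₂ = I_p with the columns of Q₂ spanning the nullspace of P(iω). Let T ∈ ℂ^{p×p} be Hermitian positive definite and, for t > 0, define P̂ₜ(λ) := P(λ) + λ·t·MQ₂TQ₂*M. Then for every t > 0: neither iω nor −iω is an eigenvalue of P̂ₜ; every eigenvalue of P other than iω and −iω is an eigenvalue of P̂ₜ; and every eigenvalue of P̂ₜ either is an eigenvalue of P different from ±iω or has strictly negative real part. -/

import Mathlib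

open Matrix ComplexOrder

/-!
A kernel vector `v` of the pencil at `iω` satisfies `D v = 0` and `K v = ω² M v`, hence
`v* P(z) x = (z² + ω²) v* M x` for all `z` and `x`. The added damping is `z M R M`, where
`R = t Q₂ T Q₂*` is positive semidefinite with `range R = ker P(iω)`; it does not act on `x` once
`R M x = 0`. Test with the kernel vector `v = R M x`, for which `v* M x = (M x)* R (M x) ≥ 0` with
equality only if `v = 0`. If `P(z) x = 0` and `z ≠ ±iω`, then `v* M x = 0`, so the damping does not
act on `x`. If the damped pencil annihilates `x` and `v ≠ 0`, then `z` is a root of the real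
quadratic `(v* M x) z² + (v* M v) z + ω² (v* M x)` with positive coefficients, so `Re z < 0`; thus
in the closed right half-plane `v = 0` and `P(z) x = 0`. At `z = ±iω` such an `x` is `R y` for some
`y`, and `x* M x = y* R M x = 0` forces `x = 0`.
-/

theorem re_neg_of_quadratic_eq_zero {a b c z : ℂ} (ha : 0 ≤ a) (hb : 0 < b) (hc : 0 < c)
    (h : a * z ^ 2 + b * z + c = 0) : z.re < 0 := by
  obtain ⟨ha_re, ha_im⟩ := Complex.nonneg_iff.1 ha
  obtain ⟨hb_re, hb_im⟩ := Complex.pos_iff.1 hb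
  obtain ⟨hc_re, hc_im⟩ := Complex.pos_iff.1 hc
  have h_re : a.re * (z.re ^ 2 - z.im ^ 2) + b.re * z.re + c.re = 0 := by
    simpa [pow_two, ← ha_im, ← hb_im] using congrArg Complex.re h
  have h_im : z.im * (2 * a.re * z.re + b.re) = 0 := by
    have := congrArg Complex.im h
    simp only [pow_two, Complex.add_im, Complex.mul_im, Complex.mul_re, ← ha_im, ← hb_im, ← hc_im,
      Complex.zero_im] at this
    linear_combination this
  by_contra! hz
  rcases mul_eq_zero.1 h_im with h_real | h_vertex
  · have : 0 ≤ a.re * z.re ^ 2 + b.re * z.re := by positivity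
    rw [h_real] at h_re
    linarith
  · have : 0 ≤ 2 * a.re * z.re := by positivity
    linarith

theorem sq_add_sq_ne_zero_of_ne {z w : ℂ} (hz : z ≠ w * Complex.I)
    (hz' : z ≠ -(w * Complex.I)) : z ^ 2 + w ^ 2 ≠ 0 := by
  have h_factor : z ^ 2 + w ^ 2 = (z - w * Complex.I) * (z - -(w * Complex.I)) := by
    linear_combination w ^ 2 * Complex.I_sq
  rw [h_factor]
  exact mul_ne_zero (sub_ne_zero.2 hz) (sub_ne_zero.2 hz')

theorem star_mulVec_dotProduct {n α : Type*} [Fintype n] [NonUnitalSemiring α] [StarRing α]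
    {A : Matrix n n α} (hA : A.IsHermitian) (x y : n → α) :
    star (A *ᵥ x) ⬝ᵥ y = star x ⬝ᵥ A *ᵥ y := by
  rw [star_mulVec, hA.eq, dotProduct_mulVec]

section Range

variable {𝕜 n m : Type*} [RCLike 𝕜] [Fintype n] [Fintype m] {T : Matrix m m 𝕜}

theorem mul_posDef_mul_conjTranspose_mulVec_eq_zero_iff (Q : Matrix n m 𝕜) (hT : T.PosDef)
    (x : n → 𝕜) : (Q * T * Qᴴ) *ᵥ x = 0 ↔ Qᴴ *ᵥ x = 0 := by
  refine ⟨fun h => ?_, fun h => by rw [← mulVec_mulVec, h, mulVec_zero]⟩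
  by_contra hQx
  refine (hT.dotProduct_mulVec_pos hQx).ne' ?_
  rw [star_mulVec, conjTranspose_conjTranspose, ← dotProduct_mulVec, mulVec_mulVec, mulVec_mulVec,
    h, dotProduct_zero]

theorem range_mul_posDef_mul_conjTranspose (Q : Matrix n m 𝕜) (hT : T.PosDef) :
    LinearMap.range (Q * T * Qᴴ).mulVecLin = LinearMap.range Q.mulVecLin := by
  have h_ker : LinearMap.ker (Q * T * Qᴴ).mulVecLin = LinearMap.ker Qᴴ.mulVecLin :=
    Submodule.ext (mul_posDef_mul_conjTranspose_mulVec_eq_zero_iff Q hT)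
  have h_rank : (Q * T * Qᴴ).rank = Q.rank := by
    have h₁ := (Q * T * Qᴴ).mulVecLin.finrank_range_add_finrank_ker
    have h₂ := Qᴴ.mulVecLin.finrank_range_add_finrank_ker
    rw [h_ker, ← h₂] at h₁
    exact (Nat.add_right_cancel h₁).trans (rank_conjTranspose Q)
  refine Submodule.eq_of_le_of_finrank_eq ?_ h_rank
  rw [Matrix.mul_assoc, mulVecLin_mul]
  exact LinearMap.range_comp_le_range _ _

end Range

/-- The quadratic matrix polynomial `P(z) = z² M + z D + K` of a damped mechanical system with mass
matrix `M`, damping matrix `D` and stiffness matrix `K`, as a function of `z`; adding `z M R M` to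
it amounts to replacing `D` by `D + M R M`. -/
def quadraticPencil {n : Type*} (M D K : Matrix n n ℂ) (z : ℂ) : Matrix n n ℂ :=
  z ^ 2 • M + z • D + K

namespace quadraticPencil

variable {n : Type*} [Fintype n] {M D K R : Matrix n n ℂ} {ω : ℝ} {z : ℂ} {x : n → ℂ}

theorem mulVec_eq (M D K : Matrix n n ℂ) (z : ℂ) (x : n → ℂ) :
    quadraticPencil M D K z *ᵥ x = z ^ 2 • (M *ᵥ x) + z • (D *ᵥ x) + K *ᵥ x := by
  simp only [quadraticPencil, add_mulVec, smul_mulVec]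

theorem damped_mulVec_eq (M D K R : Matrix n n ℂ) (z : ℂ) (x : n → ℂ) :
    quadraticPencil M (D + M * R * M) K z *ᵥ x =
      quadraticPencil M D K z *ᵥ x + z • (M *ᵥ (R *ᵥ (M *ᵥ x))) := by
  simp only [mulVec_eq, add_mulVec, smul_add, ← mulVec_mulVec]
  abel

theorem damped_mulVec_eq_of_mulVec_eq_zero (hx : R *ᵥ (M *ᵥ x) = 0) :
    quadraticPencil M (D + M * R * M) K z *ᵥ x = quadraticPencil M D K z *ᵥ x := by
  rw [damped_mulVec_eq, hx, mulVec_zero, smul_zero, add_zero]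

theorem damping_mulVec_eq_zero (hM : M.IsHermitian) (hD : D.PosSemidef) (hK : K.IsHermitian)
    (hω : ω ≠ 0) (hx : quadraticPencil M D K (ω * Complex.I) *ᵥ x = 0) : D *ᵥ x = 0 := by
  -- `x* M x` and `x* K x` are real, so the imaginary part of `x* P(iω) x = 0` is `ω x* D x = 0`.
  have h_re : (star x ⬝ᵥ D *ᵥ x).re = 0 := by
    have hM_im : (star x ⬝ᵥ M *ᵥ x).im = 0 := hM.im_star_dotProduct_mulVec_self x
    have hK_im : (star x ⬝ᵥ K *ᵥ x).im = 0 := hK.im_star_dotProduct_mulVec_self x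
    have h := congrArg (fun v => (star x ⬝ᵥ v).im) hx
    simpa [mulVec_eq, mul_pow, ← Complex.ofReal_pow, hM_im, hK_im, hω] using h
  have h_im : (star x ⬝ᵥ D *ᵥ x).im = 0 := hD.isHermitian.im_star_dotProduct_mulVec_self x
  exact (hD.dotProduct_mulVec_zero_iff x).1 (Complex.ext h_re h_im)

theorem mulVec_eq_zero_iff (hM : M.IsHermitian) (hD : D.PosSemidef) (hK : K.IsHermitian)
    (hω : ω ≠ 0) :
    quadraticPencil M D K (ω * Complex.I) *ᵥ x = 0 ↔
      D *ᵥ x = 0 ∧ K *ᵥ x = (ω : ℂ) ^ 2 • (M *ᵥ x) := by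
  have h_eq (hDx : D *ᵥ x = 0) : quadraticPencil M D K (ω * Complex.I) *ᵥ x =
      K *ᵥ x - (ω : ℂ) ^ 2 • (M *ᵥ x) := by
    rw [mulVec_eq, hDx, mul_pow, Complex.I_sq, mul_neg_one, neg_smul, smul_zero, add_zero,
      neg_add_eq_sub]
  constructor
  · intro hx
    have hDx := damping_mulVec_eq_zero hM hD hK hω hx
    exact ⟨hDx, sub_eq_zero.1 (h_eq hDx ▸ hx)⟩
  · rintro ⟨hDx, hKx⟩
    rw [h_eq hDx, hKx, sub_self]

theorem ker_neg (hM : M.IsHermitian) (hD : D.PosSemidef) (hK : K.IsHermitian) (hω : ω ≠ 0) :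
    LinearMap.ker (quadraticPencil M D K ((-ω : ℝ) * Complex.I)).mulVecLin =
      LinearMap.ker (quadraticPencil M D K (ω * Complex.I)).mulVecLin := by
  ext x
  rw [LinearMap.mem_ker, LinearMap.mem_ker, mulVecLin_apply, mulVecLin_apply,
    mulVec_eq_zero_iff hM hD hK hω, mulVec_eq_zero_iff hM hD hK (neg_ne_zero.2 hω),
    Complex.ofReal_neg, neg_sq]

theorem star_dotProduct_mulVec (hM : M.IsHermitian) (hD : D.PosSemidef) (hK : K.IsHermitian)
    (hω : ω ≠ 0) {v : n → ℂ} (hv : quadraticPencil M D K (ω * Complex.I) *ᵥ v = 0) (z : ℂ)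
    (x : n → ℂ) :
    star v ⬝ᵥ quadraticPencil M D K z *ᵥ x =
      (z ^ 2 + (ω : ℂ) ^ 2) * (star v ⬝ᵥ M *ᵥ x) := by
  obtain ⟨hDv, hKv⟩ := (mulVec_eq_zero_iff hM hD hK hω).1 hv
  have hvD : star v ⬝ᵥ D *ᵥ x = 0 := by
    rw [← star_mulVec_dotProduct hD.isHermitian, hDv, star_zero, zero_dotProduct]
  have hvK : star v ⬝ᵥ K *ᵥ x = (ω : ℂ) ^ 2 * (star v ⬝ᵥ M *ᵥ x) := by
    rw [← star_mulVec_dotProduct hK, hKv, star_smul, smul_dotProduct, star_mulVec_dotProduct hM]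
    simp
  simp only [mulVec_eq, dotProduct_add, dotProduct_smul, smul_eq_mul, hvD, hvK]
  ring

theorem mulVec_mulVec_eq_zero_of_mulVec_eq_zero (hM : M.IsHermitian) (hD : D.PosSemidef)
    (hK : K.IsHermitian) (hω : ω ≠ 0) (hR : R.PosSemidef)
    (h_range : LinearMap.range R.mulVecLin ≤
      LinearMap.ker (quadraticPencil M D K (ω * Complex.I)).mulVecLin)
    (hz : z ^ 2 + (ω : ℂ) ^ 2 ≠ 0) (hx : quadraticPencil M D K z *ᵥ x = 0) :
    R *ᵥ (M *ᵥ x) = 0 := by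
  have h := star_dotProduct_mulVec hM hD hK hω (h_range ⟨M *ᵥ x, rfl⟩) z x
  rw [hx, dotProduct_zero, mulVecLin_apply, star_mulVec_dotProduct hR.isHermitian] at h
  exact (hR.dotProduct_mulVec_zero_iff _).1 ((mul_eq_zero.1 h.symm).resolve_left hz)

theorem mulVec_mulVec_eq_zero_of_damped_mulVec_eq_zero (hM : M.PosDef) (hD : D.PosSemidef)
    (hK : K.IsHermitian) (hω : ω ≠ 0) (hR : R.PosSemidef)
    (h_range : LinearMap.range R.mulVecLin ≤
      LinearMap.ker (quadraticPencil M D K (ω * Complex.I)).mulVecLin)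
    (hz : 0 ≤ z.re) (hx : quadraticPencil M (D + M * R * M) K z *ᵥ x = 0) :
    R *ᵥ (M *ᵥ x) = 0 := by
  by_contra hv
  have h_test := star_dotProduct_mulVec hM.isHermitian hD hK hω (h_range ⟨M *ᵥ x, rfl⟩) z x
  have h_damped := congrArg (star (R *ᵥ (M *ᵥ x)) ⬝ᵥ ·) (damped_mulVec_eq M D K R z x)
  rw [mulVecLin_apply] at h_test
  simp only [hx, dotProduct_zero, dotProduct_add, dotProduct_smul, smul_eq_mul, h_test] at h_damped
  have hRx : 0 < star (R *ᵥ (M *ᵥ x)) ⬝ᵥ M *ᵥ x := by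
    rw [star_mulVec_dotProduct hR.isHermitian]
    exact (hR.dotProduct_mulVec_nonneg _).lt_of_ne'
      (mt (hR.dotProduct_mulVec_zero_iff _).1 hv)
  have hω_sq : (0 : ℂ) < (ω : ℂ) ^ 2 := by
    exact_mod_cast sq_pos_of_ne_zero hω
  refine hz.not_gt (re_neg_of_quadratic_eq_zero hRx.le (hM.dotProduct_mulVec_pos hv)
    (mul_pos hω_sq hRx) ?_)
  linear_combination -h_damped

theorem mulVec_eq_zero_of_damped_mulVec_eq_zero (hM : M.PosDef) (hD : D.PosSemidef)
    (hK : K.IsHermitian) (hω : ω ≠ 0) (hR : R.PosSemidef)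
    (h_range : LinearMap.range R.mulVecLin ≤
      LinearMap.ker (quadraticPencil M D K (ω * Complex.I)).mulVecLin)
    (hz : 0 ≤ z.re) (hx : quadraticPencil M (D + M * R * M) K z *ᵥ x = 0) :
    quadraticPencil M D K z *ᵥ x = 0 := by
  have hRx := mulVec_mulVec_eq_zero_of_damped_mulVec_eq_zero hM hD hK hω hR h_range hz hx
  rwa [damped_mulVec_eq_of_mulVec_eq_zero hRx] at hx

section Determinant

variable [DecidableEq n]

theorem det_damped_ne_zero (hM : M.PosDef) (hD : D.PosSemidef) (hK : K.IsHermitian) (hω : ω ≠ 0)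
    (hR : R.PosSemidef)
    (h_range : LinearMap.range R.mulVecLin =
      LinearMap.ker (quadraticPencil M D K (ω * Complex.I)).mulVecLin) :
    (quadraticPencil M (D + M * R * M) K (ω * Complex.I)).det ≠ 0 := by
  intro h_det
  obtain ⟨x, hx_ne, hx⟩ := exists_mulVec_eq_zero_iff.2 h_det
  have h_re : 0 ≤ ((ω : ℂ) * Complex.I).re := by simp
  have hRx := mulVec_mulVec_eq_zero_of_damped_mulVec_eq_zero hM hD hK hω hR h_range.le h_re hx
  have hPx := mulVec_eq_zero_of_damped_mulVec_eq_zero hM hD hK hω hR h_range.le h_re hx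
  obtain ⟨y, rfl⟩ : x ∈ LinearMap.range R.mulVecLin := h_range ▸ hPx
  rw [mulVecLin_apply] at hx_ne hRx
  refine (hM.dotProduct_mulVec_pos hx_ne).ne' ?_
  rw [star_mulVec_dotProduct hR.isHermitian, hRx, dotProduct_zero]

theorem det_damped_neg_ne_zero (hM : M.PosDef) (hD : D.PosSemidef) (hK : K.IsHermitian)
    (hω : ω ≠ 0) (hR : R.PosSemidef)
    (h_range : LinearMap.range R.mulVecLin =
      LinearMap.ker (quadraticPencil M D K (ω * Complex.I)).mulVecLin) :
    (quadraticPencil M (D + M * R * M) K (-(ω * Complex.I))).det ≠ 0 := by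
  simpa only [Complex.ofReal_neg, neg_mul] using
    det_damped_ne_zero hM hD hK (neg_ne_zero.2 hω) hR
      (h_range.trans (ker_neg hM.isHermitian hD hK hω).symm)

theorem det_damped_eq_zero_of_det_eq_zero (hM : M.IsHermitian) (hD : D.PosSemidef)
    (hK : K.IsHermitian) (hω : ω ≠ 0) (hR : R.PosSemidef)
    (h_range : LinearMap.range R.mulVecLin ≤
      LinearMap.ker (quadraticPencil M D K (ω * Complex.I)).mulVecLin)
    (hz : z ^ 2 + (ω : ℂ) ^ 2 ≠ 0) (h_det : (quadraticPencil M D K z).det = 0) :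
    (quadraticPencil M (D + M * R * M) K z).det = 0 := by
  obtain ⟨x, hx_ne, hx⟩ := exists_mulVec_eq_zero_iff.2 h_det
  have hRx := mulVec_mulVec_eq_zero_of_mulVec_eq_zero hM hD hK hω hR h_range hz hx
  exact exists_mulVec_eq_zero_iff.1
    ⟨x, hx_ne, (damped_mulVec_eq_of_mulVec_eq_zero hRx).trans hx⟩

theorem det_eq_zero_of_det_damped_eq_zero (hM : M.PosDef) (hD : D.PosSemidef)
    (hK : K.IsHermitian) (hω : ω ≠ 0) (hR : R.PosSemidef)
    (h_range : LinearMap.range R.mulVecLin ≤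
      LinearMap.ker (quadraticPencil M D K (ω * Complex.I)).mulVecLin)
    (hz : 0 ≤ z.re) (h_det : (quadraticPencil M (D + M * R * M) K z).det = 0) :
    (quadraticPencil M D K z).det = 0 := by
  obtain ⟨x, hx_ne, hx⟩ := exists_mulVec_eq_zero_iff.2 h_det
  exact exists_mulVec_eq_zero_iff.1
    ⟨x, hx_ne, mulVec_eq_zero_of_damped_mulVec_eq_zero hM hD hK hω hR h_range hz hx⟩

end Determinant

end quadraticPencil

open quadraticPencil in
theorem stmt14_general {n m : Type*} [Fintype n] [DecidableEq n] [Fintype m]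
    {M D K : Matrix n n ℂ} (hM : M.PosDef) (hD : D.PosSemidef) (hK : K.IsHermitian)
    {ω : ℝ} (hω : ω ≠ 0) {Q : Matrix n m ℂ}
    (hQ : ∀ x, quadraticPencil M D K (ω * Complex.I) *ᵥ x = 0 ↔ ∃ y, x = Q *ᵥ y)
    {T : Matrix m m ℂ} (hT : T.PosDef) {t : ℝ} (ht : 0 < t) :
    let P := quadraticPencil M D K
    let Pt := fun z : ℂ => P z + (z * t) • (M * Q * T * Qᴴ * M)
    ((Pt (ω * Complex.I)).det ≠ 0 ∧ (Pt (-(ω * Complex.I))).det ≠ 0) ∧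
      (∀ z, (P z).det = 0 → z ≠ ω * Complex.I → z ≠ -(ω * Complex.I) → (Pt z).det = 0) ∧
      ∀ z, (Pt z).det = 0 →
        ((P z).det = 0 ∧ z ≠ ω * Complex.I ∧ z ≠ -(ω * Complex.I)) ∨ z.re < 0 := by
  intro P Pt
  have htT : ((t : ℂ) • T).PosDef := hT.smul (by exact_mod_cast ht)
  set R := Q * ((t : ℂ) • T) * Qᴴ with hR_def
  have hR : R.PosSemidef := htT.posSemidef.mul_mul_conjTranspose_same Q
  have h_range : LinearMap.range R.mulVecLin = LinearMap.ker (P (ω * Complex.I)).mulVecLin := by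
    rw [hR_def, range_mul_posDef_mul_conjTranspose Q htT]
    ext x
    simpa only [LinearMap.mem_range, LinearMap.mem_ker, mulVecLin_apply, eq_comm] using (hQ x).symm
  have hPt : Pt = quadraticPencil M (D + M * R * M) K := by
    funext z
    simp only [Pt, P, quadraticPencil, hR_def, smul_add, Matrix.mul_smul, Matrix.smul_mul,
      smul_smul, Matrix.mul_assoc]
    abel
  have h_pos : (Pt (ω * Complex.I)).det ≠ 0 := hPt ▸ det_damped_ne_zero hM hD hK hω hR h_range
  have h_neg : (Pt (-(ω * Complex.I))).det ≠ 0 :=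
    hPt ▸ det_damped_neg_ne_zero hM hD hK hω hR h_range
  refine ⟨⟨h_pos, h_neg⟩, fun z hz hz_pos hz_neg => ?_, fun z hz => ?_⟩
  · rw [hPt]
    exact det_damped_eq_zero_of_det_eq_zero hM.isHermitian hD hK hω hR h_range.le
      (sq_add_sq_ne_zero_of_ne hz_pos hz_neg) hz
  · refine (lt_or_ge z.re 0).symm.imp_left fun h_re => ⟨?_, ?_, ?_⟩
    · exact det_eq_zero_of_det_damped_eq_zero hM hD hK hω hR h_range.le h_re (hPt ▸ hz)
    · exact fun h => h_pos (h ▸ hz)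
    · exact fun h => h_neg (h ▸ hz)

/-- Removing the purely imaginary eigenvalue pair `±iω` by the rank-`p` damping
`t · M Q₂ T Q₂* M`: for all `t > 0` neither `iω` nor `−iω` is an eigenvalue of `P̂ₜ`,
every eigenvalue of `P` other than `±iω` is an eigenvalue of `P̂ₜ`, and every eigenvalue of
`P̂ₜ` either is an eigenvalue of `P` different from `±iω` or has negative real part. -/
theorem stmt14 {n p : ℕ}
    (M D K : Matrix (Fin n) (Fin n) ℂ)
    (hM : M.PosDef) (hD : D.PosSemidef) (hK : K.PosSemidef)
    (P : ℂ → Matrix (Fin n) (Fin n) ℂ)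
    (hP : ∀ z : ℂ, P z = z ^ 2 • M + z • D + K)
    (ω : ℝ) (hω : ω ≠ 0) (hp : 1 ≤ p)
    (hgeo : Module.finrank ℂ
      (LinearMap.ker (P ((ω : ℂ) * Complex.I)).mulVecLin) = p)
    (Q₂ : Matrix (Fin n) (Fin p) ℂ) (hQorth : Q₂ᴴ * Q₂ = 1)
    (hQspan : ∀ x : Fin n → ℂ,
      (P ((ω : ℂ) * Complex.I)).mulVec x = 0 ↔ ∃ y : Fin p → ℂ, x = Q₂.mulVec y)
    (T : Matrix (Fin p) (Fin p) ℂ) (hT : T.PosDef)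
    (Ph : ℝ → ℂ → Matrix (Fin n) (Fin n) ℂ)
    (hPh : ∀ (t : ℝ) (z : ℂ), Ph t z = P z + (z * (t : ℂ)) • (M * Q₂ * T * Q₂ᴴ * M)) :
    ∀ t : ℝ, 0 < t →
      ((Ph t ((ω : ℂ) * Complex.I)).det ≠ 0 ∧
        (Ph t (-((ω : ℂ) * Complex.I))).det ≠ 0) ∧
      (∀ z : ℂ, (P z).det = 0 → z ≠ (ω : ℂ) * Complex.I →
        z ≠ -((ω : ℂ) * Complex.I) → (Ph t z).det = 0) ∧
      (∀ z : ℂ, (Ph t z).det = 0 →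
        ((P z).det = 0 ∧ z ≠ (ω : ℂ) * Complex.I ∧ z ≠ -((ω : ℂ) * Complex.I)) ∨
          z.re < 0) := by
  obtain rfl : P = quadraticPencil M D K := funext hP
  simpa only [hPh] using fun t ht => stmt14_general hM hD hK.isHermitian hω hQspan hT ht
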